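/- For all real numbers v_on, v_off, v_g with 0 < v_on < v_off < v_g, setting x = v_on/v_off and y = v_off/v_g, the probabilities p = x/(1 + x − x²) and p' = y/(1 + y − y²) both lie in the open interval (0, 1), and they achieve min_{q ∈ [0,1]} max( 1/(q·x + (1 − q)), (1 + x)/(q·x + 1) ) = 1 + x − x² and min_{q ∈ [0,1]} max( 1/(q·y + (1 − q)), (1 + y)/(q·y + 1) ) = 1 + y − y² respectively. -/

import Mathlib

/-!
As the probability `q` of scheduling at the earliest interval grows, the first ratio increases and
the second decreases. Hence their maximum is smallest where the two agree, namely at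
`q = x / (1 + x - x ^ 2)`, and both ratios equal `1 + x - x ^ 2` there.
-/

open Set

theorem isLeast_image_max_of_monotoneOn_of_antitoneOn {α β : Type*} [LinearOrder α]
    [LinearOrder β] {f g : α → β} {s : Set α} {p : α} {c : β} (hf : MonotoneOn f s)
    (hg : AntitoneOn g s) (hp : p ∈ s) (hfp : f p = c) (hgp : g p = c) :
    IsLeast ((fun q => max (f q) (g q)) '' s) c := by
  refine ⟨⟨p, hp, by simp only [hfp, hgp, max_self]⟩, ?_⟩
  rintro _ ⟨q, hq, rfl⟩
  rcases le_total p q with hpq | hqp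
  · exact le_max_of_le_left (hfp ▸ hf hp hq hpq)
  · exact le_max_of_le_right (hgp ▸ hg hq hp hqp)

namespace RandomFit

section Field

variable {K : Type*} [Field K] {x : K}

/-- The ratio of optimal to expected profit on a single job that earns `x` at its earliest interval,
chosen with probability `q`, and `1` at the later one. -/
def singleJobRatio (x q : K) : K :=
  1 / (q * x + (1 - q))

/-- The ratio of optimal to expected profit when a second job, which can only use the later
interval, follows the job of `singleJobRatio`: the optimum `1 + x` serves both jobs, and so does
the algorithm with probability `q`; otherwise it earns `1`. -/
def twoJobRatio (x q : K) : K :=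
  (1 + x) / (q * x + 1)

/-- The probability `p` of Random-Fit (or `p'`, for the other change of tariff) as a function of the
ratio `x` between the two profits per job. -/
def optimalProb (x : K) : K :=
  x / (1 + x - x ^ 2)

theorem singleJobRatio_optimalProb (hD : 1 + x - x ^ 2 ≠ 0) :
    singleJobRatio x (optimalProb x) = 1 + x - x ^ 2 := by
  have expected_profit :
      optimalProb x * x + (1 - optimalProb x) = 1 / (1 + x - x ^ 2) := by
    unfold optimalProb
    field_simp
    ring
  rw [singleJobRatio, expected_profit, one_div_one_div]

theorem twoJobRatio_optimalProb (hx : 1 + x ≠ 0) (hD : 1 + x - x ^ 2 ≠ 0) :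
    twoJobRatio x (optimalProb x) = 1 + x - x ^ 2 := by
  have expected_profit : optimalProb x * x + 1 = (1 + x) / (1 + x - x ^ 2) := by
    unfold optimalProb
    field_simp
    ring
  rw [twoJobRatio, expected_profit, div_div_cancel₀ hx]

end Field

section LinearOrderedField

variable {K : Type*} [Field K] [LinearOrder K] {x : K}

/-- The worse of the two ratios for Random-Fit with probability `q`. -/
def competitiveRatio (x q : K) : K :=
  max (singleJobRatio x q) (twoJobRatio x q)

theorem competitiveRatio_optimalProb (hx : 1 + x ≠ 0) (hD : 1 + x - x ^ 2 ≠ 0) :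
    competitiveRatio x (optimalProb x) = 1 + x - x ^ 2 := by
  rw [competitiveRatio, singleJobRatio_optimalProb hD, twoJobRatio_optimalProb hx hD, max_self]

variable [IsStrictOrderedRing K]

theorem monotoneOn_singleJobRatio (hx0 : 0 < x) (hx1 : x ≤ 1) :
    MonotoneOn (singleJobRatio x) (Iic 1) := by
  intro q _ r hr hqr
  have expected_profit_pos : 0 < r * x + (1 - r) :=
    calc
      0 < x + (1 - r) * (1 - x) :=
        add_pos_of_pos_of_nonneg hx0 (mul_nonneg (sub_nonneg.2 hr) (sub_nonneg.2 hx1))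
      _ = r * x + (1 - r) := by ring
  have expected_profit_le : r * x + (1 - r) ≤ q * x + (1 - q) := by
    linarith [mul_le_mul_of_nonneg_right hqr (sub_nonneg.2 hx1)]
  exact one_div_le_one_div_of_le expected_profit_pos expected_profit_le

theorem antitoneOn_twoJobRatio (hx : 0 ≤ x) : AntitoneOn (twoJobRatio x) (Ici 0) := by
  intro q (hq : 0 ≤ q) r _ hqr
  unfold twoJobRatio
  gcongr

theorem one_add_sub_sq_pos (hx0 : 0 ≤ x) (hx1 : x ≤ 1) : 0 < 1 + x - x ^ 2 := by
  linarith [pow_le_of_le_one hx0 hx1 two_ne_zero]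

theorem optimalProb_mem_Ioo (hx0 : 0 < x) (hx1 : x < 1) : optimalProb x ∈ Ioo 0 1 := by
  have hD : 0 < 1 + x - x ^ 2 := one_add_sub_sq_pos hx0.le hx1.le
  refine ⟨div_pos hx0 hD, (div_lt_one hD).2 ?_⟩
  linarith [pow_lt_one₀ hx0.le hx1 two_ne_zero]

theorem isLeast_competitiveRatio (hx0 : 0 < x) (hx1 : x < 1) :
    IsLeast (competitiveRatio x '' Icc 0 1) (1 + x - x ^ 2) := by
  have hD : 1 + x - x ^ 2 ≠ 0 := (one_add_sub_sq_pos hx0.le hx1.le).ne'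
  exact isLeast_image_max_of_monotoneOn_of_antitoneOn
    ((monotoneOn_singleJobRatio hx0 hx1.le).mono Icc_subset_Iic_self)
    ((antitoneOn_twoJobRatio hx0.le).mono Icc_subset_Ici_self)
    (Ioo_subset_Icc_self (optimalProb_mem_Ioo hx0 hx1))
    (singleJobRatio_optimalProb hD) (twoJobRatio_optimalProb (by positivity) hD)

end LinearOrderedField

end RandomFit

open RandomFit in
theorem stmt_13_general {K : Type*} [Field K] [LinearOrder K] [IsStrictOrderedRing K]
    (von voff vg : K) (h0 : 0 < von) (h1 : von < voff) (h2 : voff < vg)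
    (x y : K) (hx : x = von / voff) (hy : y = voff / vg) :
    optimalProb x ∈ Ioo 0 1 ∧
    optimalProb y ∈ Ioo 0 1 ∧
    IsLeast (competitiveRatio x '' Icc 0 1) (1 + x - x ^ 2) ∧
    competitiveRatio x (optimalProb x) = 1 + x - x ^ 2 ∧
    IsLeast (competitiveRatio y '' Icc 0 1) (1 + y - y ^ 2) ∧
    competitiveRatio y (optimalProb y) = 1 + y - y ^ 2 := by
  have hvoff : 0 < voff := h0.trans h1
  have hvg : 0 < vg := hvoff.trans h2
  have hx0 : 0 < x := hx ▸ div_pos h0 hvoff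
  have hx1 : x < 1 := hx ▸ (div_lt_one hvoff).2 h1
  have hy0 : 0 < y := hy ▸ div_pos hvoff hvg
  have hy1 : y < 1 := hy ▸ (div_lt_one hvg).2 h2
  have value {z : K} (hz0 : 0 < z) (hz1 : z < 1) :
      competitiveRatio z (optimalProb z) = 1 + z - z ^ 2 :=
    competitiveRatio_optimalProb (by positivity) (one_add_sub_sq_pos hz0.le hz1.le).ne'
  exact ⟨optimalProb_mem_Ioo hx0 hx1, optimalProb_mem_Ioo hy0 hy1,
    isLeast_competitiveRatio hx0 hx1, value hx0 hx1, isLeast_competitiveRatio hy0 hy1,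
    value hy0 hy1⟩

/-- For `0 < v_on < v_off < v_g`, set `x = v_on/v_off` and `y = v_off/v_g`.
Then `p = x/(1 + x - x^2)` and `p' = y/(1 + y - y^2)` both lie in `(0,1)`, and they
realize `min_{q ∈ [0,1]} max (1/(q*x + (1-q))) ((1+x)/(q*x + 1)) = 1 + x - x^2`
(respectively with `y`). -/
theorem stmt_13 (von voff vg : ℝ) (h0 : 0 < von) (h1 : von < voff) (h2 : voff < vg)
    (x y : ℝ) (hx : x = von / voff) (hy : y = voff / vg) :
    x / (1 + x - x ^ 2) ∈ Set.Ioo (0 : ℝ) 1 ∧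
    y / (1 + y - y ^ 2) ∈ Set.Ioo (0 : ℝ) 1 ∧
    IsLeast
      ((fun q : ℝ => max (1 / (q * x + (1 - q))) ((1 + x) / (q * x + 1))) ''
        Set.Icc (0 : ℝ) 1) (1 + x - x ^ 2) ∧
    (fun q : ℝ => max (1 / (q * x + (1 - q))) ((1 + x) / (q * x + 1)))
        (x / (1 + x - x ^ 2)) = 1 + x - x ^ 2 ∧
    IsLeast
      ((fun q : ℝ => max (1 / (q * y + (1 - q))) ((1 + y) / (q * y + 1))) ''
        Set.Icc (0 : ℝ) 1) (1 + y - y ^ 2) ∧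
    (fun q : ℝ => max (1 / (q * y + (1 - q))) ((1 + y) / (q * y + 1)))
        (y / (1 + y - y ^ 2)) = 1 + y - y ^ 2 :=
  stmt_13_general von voff vg h0 h1 h2 x y hx hy
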